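/- arXiv:1607.03128 — 5 statements merged into one kernel-verified Lean document; each statement's English description precedes it below -/
import Mathlib

section
/- Let N_T, N_R ∈ {2,3}, let H_RR be an N_R × N_T complex matrix of full rank (i.e., rank(H_RR) = min(N_R, N_T)), and let Q be a nonzero N_T × N_R complex matrix satisfying Q · H_RR · Q = 0. Then rank(Q) = 1. -/
theorem aux_rank_zero {m n : ℕ} (Q : Matrix (Fin m) (Fin n) ℂ) (h : Q.rank = 0) : Q = 0 := by
  have h1 : LinearMap.range Q.mulVecLin = ⊥ := Submodule.finrank_eq_zero.mp h
  have h2 : Q.mulVecLin = 0 := LinearMap.range_eq_bot.mp h1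
  ext i j
  have := congrFun (LinearMap.congr_fun h2 (Pi.single j 1)) i
  simpa using this

theorem aux_rank_mul {a b c : ℕ} (H : Matrix (Fin a) (Fin b) ℂ) (h : H.rank = b)
    (Q : Matrix (Fin b) (Fin c) ℂ) : (H * Q).rank = Q.rank := by
  have hk := LinearMap.finrank_range_add_finrank_ker H.mulVecLin
  have h' : Module.finrank ℂ (LinearMap.range H.mulVecLin) = b := h
  rw [h', Module.finrank_fintype_fun_eq_card, Fintype.card_fin] at hk
  have hker : LinearMap.ker H.mulVecLin = ⊥ := Submodule.finrank_eq_zero.mp (by omega)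
  have hinj : Function.Injective H.mulVecLin := LinearMap.ker_eq_bot.mp hker
  unfold Matrix.rank
  rw [Matrix.mulVecLin_mul, LinearMap.range_comp]
  exact (Submodule.equivMapOfInjective H.mulVecLin hinj _).finrank_eq.symm

/-- If `N_T, N_R ∈ {2,3}`, the residual self-interference channel `H_RR` has full rank,
and the nonzero amplification matrix `Q` satisfies the zero-forcing constraint
`Q * H_RR * Q = 0`, then `Q` has rank one. -/
theorem stmt0 (N_T N_R : ℕ)
    (hT : N_T ∈ ({2, 3} : Set ℕ)) (hR : N_R ∈ ({2, 3} : Set ℕ))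
    (H_RR : Matrix (Fin N_R) (Fin N_T) ℂ)
    (hfull : H_RR.rank = min N_R N_T)
    (Q : Matrix (Fin N_T) (Fin N_R) ℂ) (hQ : Q ≠ 0)
    (hZF : Q * H_RR * Q = 0) :
    Q.rank = 1 := by
  have hne : Q.rank ≠ 0 := fun h => hQ (aux_rank_zero Q h)
  have hT' : N_T ≤ 3 := by rcases hT with h | h <;> simp_all
  have hR' : N_R ≤ 3 := by rcases hR with h | h <;> simp_all
  rcases le_total N_T N_R with hle | hle
  · rw [min_eq_right hle] at hfull
    have h1 := aux_rank_mul H_RR hfull Q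
    rw [Matrix.mul_assoc] at hZF
    have h2 := Matrix.rank_add_rank_le_card_of_mul_eq_zero hZF
    rw [h1, Fintype.card_fin] at h2
    omega
  · rw [min_eq_left hle] at hfull
    have h1 := aux_rank_mul H_RR.transpose (by rw [Matrix.rank_transpose, hfull]) Q.transpose
    rw [← Matrix.transpose_mul, Matrix.rank_transpose, Matrix.rank_transpose] at h1
    have h2 := Matrix.rank_add_rank_le_card_of_mul_eq_zero hZF
    rw [h1, Fintype.card_fin] at h2
    omega
end

section
/- Let H_RD be an N_D × N_T complex matrix, H_SR an N_R × N_S complex matrix, V an N_S × d complex matrix, x_t ∈ ℂ^{N_T}, x_r ∈ ℂ^{N_R}, and let σ_R ≥ 0, σ_D > 0 be reals. Set Q = x_t x_r^H (rank-one). Then det( I + H_RD Q H_SR V V^H H_SR^H Q^H H_RD^H · (σ_R² H_RD Q Q^H H_RD^H + σ_D² I)^{-1} ) = 1 + (‖x_r^H H_SR V‖² · ‖H_RD x_t‖²) / (σ_R² ‖x_r‖² ‖H_RD x_t‖² + σ_D²). -/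
open Matrix

theorem dot_star_aux {n : ℕ} (g : Fin n → ℂ) :
    g ⬝ᵥ star g = ((∑ j, ‖g j‖ ^ 2 : ℝ) : ℂ) := by
  simp only [dotProduct, Pi.star_apply, RCLike.star_def, Complex.mul_conj']
  push_cast
  rfl

theorem det_aux {n : ℕ} (h : Fin n → ℂ) (a t s N : ℂ) (hN : star h ⬝ᵥ h = N)
    (hs : s ≠ 0) (hc : t * N + s ≠ 0) :
    Matrix.det (1 + a • vecMulVec h (star h) * (t • vecMulVec h (star h) + s • 1)⁻¹)
      = 1 + a * N / (t * N + s) := by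
  have hPP : vecMulVec h (star h) * vecMulVec h (star h) = N • vecMulVec h (star h) := by
    rw [vecMulVec_mul_vecMulVec, hN, vecMulVec_smul]
  have hinv : (t • vecMulVec h (star h) + s • (1 : Matrix (Fin n) (Fin n) ℂ))⁻¹
      = s⁻¹ • (1 : Matrix (Fin n) (Fin n) ℂ)
        - (s⁻¹ * t / (t * N + s)) • vecMulVec h (star h) := by
    apply Matrix.inv_eq_right_inv
    simp only [add_mul, mul_sub, Matrix.smul_mul, Matrix.mul_smul, hPP, Matrix.one_mul,
      Matrix.mul_one]
    match_scalars <;> field_simp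
    ring
  have hmul : a • vecMulVec h (star h) * (t • vecMulVec h (star h) + s • 1)⁻¹
      = vecMulVec ((a / (t * N + s)) • h) (star h) := by
    rw [hinv, smul_vecMulVec]
    simp only [mul_sub, Matrix.smul_mul, Matrix.mul_smul, hPP, Matrix.mul_one]
    match_scalars
    field_simp
    ring
  rw [hmul, vecMulVec_eq Unit, det_one_add_replicateCol_mul_replicateRow, dotProduct_smul, hN,
    smul_eq_mul]
  ring

/-- With a rank-one relay amplification matrix `Q = x_t x_rᴴ`, the end-to-end
achievable-rate determinant reduces to a scalar SINR expression. -/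
theorem stmt2 (N_D N_T N_R N_S d : ℕ)
    (H_RD : Matrix (Fin N_D) (Fin N_T) ℂ)
    (H_SR : Matrix (Fin N_R) (Fin N_S) ℂ)
    (V : Matrix (Fin N_S) (Fin d) ℂ)
    (x_t : Fin N_T → ℂ) (x_r : Fin N_R → ℂ)
    (σR σD : ℝ) (hσR : 0 ≤ σR) (hσD : 0 < σD)
    (Q : Matrix (Fin N_T) (Fin N_R) ℂ)
    (hQ : Q = Matrix.vecMulVec x_t (star x_r)) :
    Matrix.det (1 + H_RD * Q * H_SR * V * Vᴴ * H_SRᴴ * Qᴴ * H_RDᴴ *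
        (((σR ^ 2 : ℝ) : ℂ) • (H_RD * Q * Qᴴ * H_RDᴴ) + ((σD ^ 2 : ℝ) : ℂ) • 1)⁻¹)
      = ((1 + (∑ j, ‖Matrix.vecMul (star x_r) (H_SR * V) j‖ ^ 2) *
            (∑ i, ‖H_RD.mulVec x_t i‖ ^ 2) /
          (σR ^ 2 * (∑ i, ‖x_r i‖ ^ 2) * (∑ i, ‖H_RD.mulVec x_t i‖ ^ 2) + σD ^ 2) : ℝ) : ℂ) := by
  have h1 : H_RD * Q * H_SR * V * Vᴴ * H_SRᴴ * Qᴴ * H_RDᴴ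
      = ((∑ j, ‖Matrix.vecMul (star x_r) (H_SR * V) j‖ ^ 2 : ℝ) : ℂ) •
        vecMulVec (H_RD *ᵥ x_t) (star (H_RD *ᵥ x_t)) := by
    have : H_RD * Q * H_SR * V * Vᴴ * H_SRᴴ * Qᴴ * H_RDᴴ
        = (H_RD * Q * (H_SR * V)) * (H_RD * Q * (H_SR * V))ᴴ := by
      simp only [conjTranspose_mul, Matrix.mul_assoc]
    rw [this, hQ, mul_vecMulVec, vecMulVec_mul, conjTranspose_vecMulVec,
      vecMulVec_mul_vecMulVec, dot_star_aux, vecMulVec_smul]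
  have h2 : H_RD * Q * Qᴴ * H_RDᴴ
      = ((∑ i, ‖x_r i‖ ^ 2 : ℝ) : ℂ) •
        vecMulVec (H_RD *ᵥ x_t) (star (H_RD *ᵥ x_t)) := by
    have : H_RD * Q * Qᴴ * H_RDᴴ = (H_RD * Q) * (H_RD * Q)ᴴ := by
      simp only [conjTranspose_mul, Matrix.mul_assoc]
    rw [this, hQ, mul_vecMulVec, conjTranspose_vecMulVec,
      vecMulVec_mul_vecMulVec, star_star, dotProduct_comm, dot_star_aux, vecMulVec_smul]
  have hpos : 0 < σR ^ 2 * (∑ i, ‖x_r i‖ ^ 2) * (∑ i, ‖H_RD.mulVec x_t i‖ ^ 2) + σD ^ 2 := by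
    positivity
  have hN : star (H_RD *ᵥ x_t) ⬝ᵥ (H_RD *ᵥ x_t)
      = ((∑ i, ‖H_RD.mulVec x_t i‖ ^ 2 : ℝ) : ℂ) := by
    rw [dotProduct_comm, dot_star_aux]
  rw [h1, h2, smul_smul, det_aux _ _ _ _ _ hN]
  · push_cast
    rfl
  · exact_mod_cast (pow_pos hσD 2).ne'
  · exact_mod_cast hpos.ne'
end

section
/- Let H be an N_D × 2 complex matrix, let v ∈ ℂ² be nonzero, and set Π = I − v v^H/‖v‖² (a 2 × 2 matrix). Then the largest eigenvalue of the Hermitian matrix H Π H^H equals Re(trace(H^H H)) − ‖H v‖²/‖v‖². -/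
open Matrix
open scoped ComplexOrder

lemma aux_sup {n : ℕ} (f : Fin n → ℝ) (h0 : ∀ i, 0 ≤ f i)
    (h1 : ∀ i j, f i ≠ 0 → f j ≠ 0 → i = j) : (⨆ i, f i) = ∑ i, f i := by
  by_cases h : ∃ i, f i ≠ 0
  · obtain ⟨i, hi⟩ := h
    have hz : ∀ j, j ≠ i → f j = 0 := fun j hj => by
      by_contra hc
      exact hj (h1 j i hc hi)
    rw [Finset.sum_eq_single i (fun j _ hj => hz j hj) (by simp)]
    have : Nonempty (Fin n) := ⟨i⟩
    apply le_antisymm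
    · apply ciSup_le
      intro j
      by_cases hj : j = i
      · rw [hj]
      · rw [hz j hj]; exact h0 i
    · exact le_ciSup (Set.finite_range f).bddAbove i
  · push Not at h
    simp [h]

/-- For `N_T = 2`, the largest eigenvalue of `H Π Hᴴ`, where `Π = I - v vᴴ / ‖v‖²`,
equals `Re (trace (Hᴴ H)) - ‖H v‖² / ‖v‖²`. -/
theorem stmt7 (N_D : ℕ) (H : Matrix (Fin N_D) (Fin 2) ℂ)
    (v : Fin 2 → ℂ) (hv : v ≠ 0)
    (Pi : Matrix (Fin 2) (Fin 2) ℂ)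
    (hPi : Pi = 1 - (((∑ i, ‖v i‖ ^ 2 : ℝ) : ℂ))⁻¹ • Matrix.vecMulVec v (star v))
    (hC : (H * Pi * Hᴴ).IsHermitian) :
    (⨆ i, hC.eigenvalues i)
      = (Matrix.trace (Hᴴ * H)).re - (∑ i, ‖H.mulVec v i‖ ^ 2) / (∑ i, ‖v i‖ ^ 2) := by
  have hvmv : ∀ x : Fin 2 → ℂ, H * vecMulVec x (star x) * Hᴴ
      = vecMulVec (H *ᵥ x) (star (H *ᵥ x)) := by
    intro x
    rw [mul_vecMulVec, vecMulVec_mul, star_mulVec]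
  have hs0 : 0 < ∑ i, ‖v i‖ ^ 2 := by
    obtain ⟨i, hi⟩ := Function.ne_iff.mp hv
    exact Finset.sum_pos' (fun _ _ => by positivity)
      ⟨i, Finset.mem_univ _, by have := norm_pos_iff.mpr hi; positivity⟩
  have hsC : (((∑ i, ‖v i‖ ^ 2 : ℝ) : ℂ)) = v 0 * star (v 0) + v 1 * star (v 1) := by
    simp [Fin.sum_univ_two, Complex.mul_conj, Complex.normSq_eq_norm_sq]
  have hdot : ∀ (n : ℕ) (x : Fin n → ℂ), x ⬝ᵥ star x = ((∑ i, ‖x i‖ ^ 2 : ℝ) : ℂ) := by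
    intro n x
    simp [dotProduct, Complex.mul_conj, Complex.normSq_eq_norm_sq]
  set s : ℝ := ∑ i, ‖v i‖ ^ 2 with hs
  have hsne : (s : ℂ) ≠ 0 := by exact_mod_cast hs0.ne'
  have hPi2 : Pi = (s : ℂ)⁻¹ • vecMulVec ![-star (v 1), star (v 0)]
      (star ![-star (v 1), star (v 0)]) := by
    have h1 : (1 : Matrix (Fin 2) (Fin 2) ℂ) = (s : ℂ)⁻¹ • ((s : ℂ) • 1) := by
      rw [smul_smul, inv_mul_cancel₀ hsne, one_smul]
    rw [hPi, h1, ← smul_sub]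
    congr 1
    rw [hsC]
    ext i j
    fin_cases i <;> fin_cases j <;> simp [vecMulVec_apply] <;> ring
  have hM2 : H * Pi * Hᴴ = (s : ℂ)⁻¹ • vecMulVec (H *ᵥ ![-star (v 1), star (v 0)])
      (star (H *ᵥ ![-star (v 1), star (v 0)])) := by
    rw [hPi2, Matrix.mul_smul, Matrix.smul_mul, hvmv]
  have hpsd : (H * Pi * Hᴴ).PosSemidef := by
    rw [hM2]
    refine (posSemidef_vecMulVec_self_star _).smul ?_
    rw [← Complex.ofReal_inv]
    exact_mod_cast (inv_pos.mpr hs0).le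
  have hrank : (H * Pi * Hᴴ).rank ≤ 1 := by
    rw [hM2, ← smul_vecMulVec]
    exact rank_vecMulVec_le _ _
  rw [hC.rank_eq_card_non_zero_eigs, Fintype.card_le_one_iff] at hrank
  rw [aux_sup _ (fun i => hpsd.eigenvalues_nonneg i)
    (fun i j hi hj => congrArg Subtype.val (hrank ⟨i, hi⟩ ⟨j, hj⟩))]
  have ht := hC.trace_eq_sum_eigenvalues
  have ht2 : (H * Pi * Hᴴ).trace = (Hᴴ * H).trace
      - (((∑ i, ‖H.mulVec v i‖ ^ 2) / s : ℝ) : ℂ) := by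
    rw [hPi, Matrix.mul_sub, Matrix.sub_mul, Matrix.mul_smul, Matrix.smul_mul, hvmv,
      trace_sub, trace_smul, trace_vecMulVec, hdot, Matrix.mul_one, trace_mul_comm H]
    push_cast
    rw [smul_eq_mul, div_eq_inv_mul]
  rw [ht2] at ht
  have := congrArg Complex.re ht
  rw [Complex.sub_re, Complex.ofReal_re] at this
  rw [this]
  simp
end

section
/- Let Q be an N_T × N_R complex matrix and H an N_R × N_T complex matrix. Define f(R) = ‖R^H Q‖² + ‖R^H − Q H‖² for N_T × N_T complex matrices R, where ‖·‖ is the Frobenius norm. Then R* = (I + Q Q^H)^{-1} H^H Q^H is the unique global minimizer of f: for every R ≠ R*, f(R) > f(R*). -/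
open Matrix

open scoped ComplexOrder in
lemma isUnit_det_one_add {m n : ℕ} (Q : Matrix (Fin m) (Fin n) ℂ) :
    IsUnit (1 + Q * Qᴴ).det := by
  have hpd : (1 + Q * Qᴴ).PosDef :=
    Matrix.PosDef.one.add_posSemidef (Matrix.posSemidef_self_mul_conjTranspose Q)
  exact (Matrix.isUnit_iff_isUnit_det _).1 hpd.isUnit

lemma frob_add {m n : ℕ} (A B : Matrix (Fin m) (Fin n) ℂ) :
    (∑ i, ∑ j, ‖(A + B) i j‖ ^ 2) = (∑ i, ∑ j, ‖A i j‖ ^ 2) + (∑ i, ∑ j, ‖B i j‖ ^ 2)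
      + 2 * (A * Bᴴ).trace.re := by
  simp only [Matrix.trace, Matrix.diag, Matrix.mul_apply, Complex.re_sum, Finset.mul_sum,
    ← Finset.sum_add_distrib, Matrix.conjTranspose_apply]
  refine Finset.sum_congr rfl fun i _ => Finset.sum_congr rfl fun j _ => ?_
  simp only [Matrix.add_apply, Complex.sq_norm, Complex.normSq_apply, Complex.mul_re,
    Complex.add_re, Complex.add_im, RCLike.star_def, Complex.conj_re, Complex.conj_im]
  ring

/-- `R* = (I + Q Qᴴ)⁻¹ Hᴴ Qᴴ` is the unique global minimizer of
`f(R) = ‖Rᴴ Q‖² + ‖Rᴴ - Q H‖²` (Frobenius norms). -/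
theorem stmt11 (N_T N_R : ℕ)
    (Q : Matrix (Fin N_T) (Fin N_R) ℂ) (H : Matrix (Fin N_R) (Fin N_T) ℂ)
    (f : Matrix (Fin N_T) (Fin N_T) ℂ → ℝ)
    (hf : ∀ R : Matrix (Fin N_T) (Fin N_T) ℂ,
      f R = (∑ i, ∑ j, ‖(Rᴴ * Q) i j‖ ^ 2) + (∑ i, ∑ j, ‖(Rᴴ - Q * H) i j‖ ^ 2))
    (Rstar : Matrix (Fin N_T) (Fin N_T) ℂ)
    (hRstar : Rstar = (1 + Q * Qᴴ)⁻¹ * Hᴴ * Qᴴ) :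
    ∀ R : Matrix (Fin N_T) (Fin N_T) ℂ, R ≠ Rstar → f Rstar < f R := by
  intro R hR
  have hdet := isUnit_det_one_add Q
  have h1 : (1 + Q * Qᴴ) * Rstar = Hᴴ * Qᴴ := by
    rw [hRstar, Matrix.mul_assoc, Matrix.mul_nonsing_inv_cancel_left _ _ hdet]
  have h2 : Rstarᴴ * (1 + Q * Qᴴ) = Q * H := by
    have := congrArg Matrix.conjTranspose h1
    simpa [Matrix.conjTranspose_mul] using this
  obtain ⟨D, rfl⟩ : ∃ D, R = Rstar + D := ⟨R - Rstar, by abel⟩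
  have hD : D ≠ 0 := by
    rintro rfl
    exact hR (add_zero _)
  have e1 : (Rstar + D)ᴴ * Q = Rstarᴴ * Q + Dᴴ * Q := by
    rw [Matrix.conjTranspose_add, Matrix.add_mul]
  have e2 : (Rstar + D)ᴴ - Q * H = (Rstarᴴ - Q * H) + Dᴴ := by
    rw [Matrix.conjTranspose_add]; abel
  have hc : (Rstarᴴ * Q) * (Dᴴ * Q)ᴴ + (Rstarᴴ - Q * H) * Dᴴᴴ = 0 := by
    rw [← h2]
    simp only [Matrix.conjTranspose_mul, Matrix.conjTranspose_conjTranspose, Matrix.mul_add,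
      Matrix.mul_one, Matrix.sub_mul, Matrix.add_mul, Matrix.mul_assoc]
    abel
  have hc2 := congrArg (fun M => (Matrix.trace M).re) hc
  simp only [Matrix.trace_add, Complex.add_re, Matrix.trace_zero, Complex.zero_re] at hc2
  rw [hf, hf, e1, e2, frob_add, frob_add]
  have p1 : 0 ≤ ∑ i, ∑ j, ‖(Dᴴ * Q) i j‖ ^ 2 := by positivity
  have p2 : 0 < ∑ i, ∑ j, ‖Dᴴ i j‖ ^ 2 := by
    obtain ⟨j, i, hij⟩ : ∃ j i, D j i ≠ 0 := by
      by_contra! h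
      exact hD (by ext j i; exact h j i)
    refine Finset.sum_pos' (fun _ _ => by positivity) ⟨i, Finset.mem_univ _, ?_⟩
    refine Finset.sum_pos' (fun _ _ => by positivity) ⟨j, Finset.mem_univ _, ?_⟩
    have : Dᴴ i j ≠ 0 := by simpa using hij
    positivity
  linarith
end

section
/- Let H be an N_D × N_T complex matrix, S an N_T × d complex matrix, Q an N_T × N_R complex matrix, and σ_R ≥ 0, σ_D > 0 reals. Let N = σ_R² H Q Q^H H^H + σ_D² I (Hermitian positive definite) and R = log det( I + H S S^H H^H N^{-1} ) (a positive real number). For an N_D × d complex matrix U and a d × d Hermitian positive definite complex matrix W, define E(U) = (I − U^H H S)(I − U^H H S)^H + σ_R² U^H H Q Q^H H^H U + σ_D² U^H U and Φ(U, W) = log det(W) − Re(trace(W · E(U))) + d. Then sup over all such (U, W) of Φ(U, W) equals R, and the supremum is attained. -/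
open Matrix
open scoped ComplexOrder

open scoped MatrixOrder in
lemma exists_factor {n : ℕ} {A : Matrix (Fin n) (Fin n) ℂ} (hA : A.PosSemidef) :
    ∃ B : Matrix (Fin n) (Fin n) ℂ, A = Bᴴ * B :=
  CStarAlgebra.nonneg_iff_eq_star_mul_self.mp hA.nonneg

lemma trace_mul_re_nonneg {n : ℕ} {A P : Matrix (Fin n) (Fin n) ℂ} (hA : A.PosSemidef)
    (hP : P.PosSemidef) : 0 ≤ (trace (A * P)).re := by
  obtain ⟨B, rfl⟩ := exists_factor hA
  rw [Matrix.mul_assoc, trace_mul_comm]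
  exact (Complex.le_def.mp (hP.mul_mul_conjTranspose_same B).trace_nonneg).1

lemma log_det_le {n : ℕ} {X : Matrix (Fin n) (Fin n) ℂ} (hX : X.PosDef) :
    Real.log X.det.re ≤ (trace X).re - n := by
  rw [hX.1.det_eq_prod_eigenvalues, hX.1.trace_eq_sum_eigenvalues]
  have h1 : (∏ i, ((hX.1.eigenvalues i : ℝ) : ℂ)).re = ∏ i, hX.1.eigenvalues i := by
    rw [← Complex.ofReal_prod, Complex.ofReal_re]
  have h2 : (∑ i, ((hX.1.eigenvalues i : ℝ) : ℂ)).re = ∑ i, hX.1.eigenvalues i := by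
    rw [← Complex.ofReal_sum, Complex.ofReal_re]
  erw [h1, h2]
  rw [Real.log_prod (fun i _ => (hX.eigenvalues_pos i).ne')]
  have := Finset.sum_le_sum (s := Finset.univ) (fun i _ =>
    Real.log_le_sub_one_of_pos (hX.eigenvalues_pos i))
  simpa using this

lemma det_re_pos {n : ℕ} {X : Matrix (Fin n) (Fin n) ℂ} (hX : X.PosDef) :
    0 < X.det.re ∧ X.det = (X.det.re : ℂ) := by
  have := Complex.lt_def.mp hX.det_pos
  refine ⟨this.1, ?_⟩
  apply Complex.ext <;> simp [← this.2]

lemma log_det_bound {n : ℕ} {W M : Matrix (Fin n) (Fin n) ℂ} (hW : W.PosDef) (hM : M.PosDef) :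
    Real.log W.det.re - (trace (W * M⁻¹)).re + n ≤ Real.log M.det.re := by
  obtain ⟨B, hB⟩ := exists_factor hM.inv.posSemidef
  have hdet : (B * W * Bᴴ).det * M.det = W.det := by
    have : (B * W * Bᴴ).det = W.det * M⁻¹.det := by
      rw [hB]; simp only [det_mul]; ring
    rw [this, mul_assoc, ← det_mul, nonsing_inv_mul _ (isUnit_iff_ne_zero.mpr hM.det_pos.ne')]
    simp
  have hX : (B * W * Bᴴ).PosDef := by
    rw [(hW.posSemidef.mul_mul_conjTranspose_same B).posDef_iff_det_ne_zero]
    intro h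
    rw [h, zero_mul] at hdet
    exact hW.det_pos.ne hdet
  have h1 := log_det_le hX
  have htr : trace (B * W * Bᴴ) = trace (W * M⁻¹) := by
    rw [hB, Matrix.mul_assoc, trace_mul_comm, Matrix.mul_assoc]
  obtain ⟨hx, hx'⟩ := det_re_pos hX
  obtain ⟨hm, hm'⟩ := det_re_pos hM
  have hre : W.det.re = (B * W * Bᴴ).det.re * M.det.re := by
    rw [← hdet, hx', hm', ← Complex.ofReal_mul]; simp only [Complex.ofReal_re]
  rw [hre, Real.log_mul hx.ne' hm.ne', ← htr]
  linarith

lemma mse_decomp {m n : ℕ} {N : Matrix (Fin m) (Fin m) ℂ} (hN : N.PosDef)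
    (G : Matrix (Fin m) (Fin n) ℂ) {M : Matrix (Fin n) (Fin n) ℂ} (hM : M.PosDef)
    (hMe : M = 1 + Gᴴ * N⁻¹ * G) (U : Matrix (Fin m) (Fin n) ℂ) :
    (1 - Uᴴ * G) * (1 - Uᴴ * G)ᴴ + Uᴴ * N * U =
      M⁻¹ + (U - N⁻¹ * G * M⁻¹)ᴴ * (N + G * Gᴴ) * (U - N⁻¹ * G * M⁻¹) := by
  have hMM : M * M⁻¹ = 1 := mul_nonsing_inv _ (isUnit_iff_ne_zero.mpr hM.det_pos.ne')
  have hNN : N * N⁻¹ = 1 := mul_nonsing_inv _ (isUnit_iff_ne_zero.mpr hN.det_pos.ne')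
  have hK : Gᴴ * N⁻¹ * G = M - 1 := by rw [hMe, add_sub_cancel_left]
  obtain ⟨V, hV⟩ : ∃ V, V = N⁻¹ * G * M⁻¹ := ⟨_, rfl⟩
  obtain ⟨A, hA⟩ : ∃ A, A = N + G * Gᴴ := ⟨_, rfl⟩
  rw [← hV, ← hA]
  have hAh : Aᴴ = A := by
    rw [hA, conjTranspose_add, conjTranspose_mul, conjTranspose_conjTranspose, hN.1.eq]
  have hAV : A * V = G := by
    have : A * V = G * (M * M⁻¹) := by
      have e : A * V = (N * N⁻¹) * G * M⁻¹ + G * (Gᴴ * N⁻¹ * G) * M⁻¹ := by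
        rw [hA, hV]; simp only [Matrix.add_mul, Matrix.mul_assoc]
      rw [e, hNN, hK, ← Matrix.mul_assoc]
      simp only [Matrix.sub_mul, Matrix.mul_sub, Matrix.one_mul, Matrix.mul_one]
      abel
    rw [this, hMM, Matrix.mul_one]
  have hVA : Vᴴ * A = Gᴴ := by
    rw [← congrArg conjTranspose hAV, conjTranspose_mul, hAh]
  have hGV : Gᴴ * V = 1 - M⁻¹ := by
    have e : Gᴴ * V = (M - 1) * M⁻¹ := by
      rw [← hK, hV]; simp only [Matrix.mul_assoc]
    rw [e, Matrix.sub_mul, hMM, Matrix.one_mul]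
  have eR : (U - V)ᴴ * A * (U - V) = Uᴴ * A * U - Uᴴ * (A * V) - (Vᴴ * A) * U + (Vᴴ * A) * V := by
    rw [conjTranspose_sub]; simp only [Matrix.sub_mul, Matrix.mul_sub, Matrix.mul_assoc]; abel
  rw [eR, hAV, hVA, hGV, hA]
  simp only [conjTranspose_sub, conjTranspose_one, conjTranspose_mul, conjTranspose_conjTranspose,
    Matrix.sub_mul, Matrix.mul_sub, Matrix.add_mul, Matrix.mul_add, Matrix.mul_assoc,
    Matrix.one_mul, Matrix.mul_one]
  abel

/-- WMMSE identity: the supremum of the surrogate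
`Φ(U, W) = log det W - Re (trace (W E(U))) + d` over receive filters `U` and Hermitian
positive definite weights `W` is attained and equals the achievable rate
`R = log det (I + H S Sᴴ Hᴴ N⁻¹)` with `N = σ_R² H Q Qᴴ Hᴴ + σ_D² I`. -/
theorem stmt14 (N_D N_T N_R d : ℕ)
    (H : Matrix (Fin N_D) (Fin N_T) ℂ)
    (S : Matrix (Fin N_T) (Fin d) ℂ)
    (Q : Matrix (Fin N_T) (Fin N_R) ℂ)
    (σR σD : ℝ) (hσR : 0 ≤ σR) (hσD : 0 < σD)
    (Nm : Matrix (Fin N_D) (Fin N_D) ℂ)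
    (hNm : Nm = ((σR ^ 2 : ℝ) : ℂ) • (H * Q * Qᴴ * Hᴴ) + ((σD ^ 2 : ℝ) : ℂ) • 1)
    (E : Matrix (Fin N_D) (Fin d) ℂ → Matrix (Fin d) (Fin d) ℂ)
    (hE : ∀ U : Matrix (Fin N_D) (Fin d) ℂ,
      E U = (1 - Uᴴ * H * S) * (1 - Uᴴ * H * S)ᴴ
        + ((σR ^ 2 : ℝ) : ℂ) • (Uᴴ * H * Q * Qᴴ * Hᴴ * U)
        + ((σD ^ 2 : ℝ) : ℂ) • (Uᴴ * U)) :
    IsGreatest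
      { r : ℝ | ∃ (U : Matrix (Fin N_D) (Fin d) ℂ) (W : Matrix (Fin d) (Fin d) ℂ),
          W.PosDef ∧ r = Real.log (W.det.re) - (Matrix.trace (W * E U)).re + d }
      (Real.log ((Matrix.det (1 + H * S * Sᴴ * Hᴴ * Nm⁻¹)).re)) := by
  have hσ : (0 : ℂ) < ((σD ^ 2 : ℝ) : ℂ) := by
    rw [Complex.zero_lt_real]; positivity
  have hσ' : (0 : ℂ) ≤ ((σR ^ 2 : ℝ) : ℂ) := by
    rw [Complex.zero_le_real]; positivity
  have hN : Nm.PosDef := by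
    rw [hNm]
    refine PosDef.posSemidef_add (PosSemidef.smul ?_ hσ') (PosDef.smul PosDef.one hσ)
    have := posSemidef_self_mul_conjTranspose (H * Q)
    rwa [conjTranspose_mul, ← Matrix.mul_assoc] at this
  obtain ⟨M, hMe⟩ : ∃ M, M = 1 + (H * S)ᴴ * Nm⁻¹ * (H * S) := ⟨_, rfl⟩
  have hM : M.PosDef := by
    rw [hMe]
    exact PosDef.one.add_posSemidef (hN.inv.posSemidef.conjTranspose_mul_mul_same _)
  have hdet : Matrix.det (1 + H * S * Sᴴ * Hᴴ * Nm⁻¹) = M.det := by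
    have e : H * S * Sᴴ * Hᴴ * Nm⁻¹ = (H * S) * ((H * S)ᴴ * Nm⁻¹) := by
      rw [conjTranspose_mul]; simp only [Matrix.mul_assoc]
    rw [e, det_one_add_mul_comm, hMe]
  have hEU : ∀ U, E U = M⁻¹ + (U - Nm⁻¹ * (H * S) * M⁻¹)ᴴ * (Nm + (H * S) * (H * S)ᴴ)
      * (U - Nm⁻¹ * (H * S) * M⁻¹) := by
    intro U
    rw [← mse_decomp hN (H * S) hM hMe U, hE, ← Matrix.mul_assoc, add_assoc]
    congr 1
    rw [hNm]
    simp only [Matrix.mul_add, Matrix.add_mul, Matrix.mul_smul, Matrix.smul_mul, Matrix.mul_one,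
      Matrix.mul_assoc]
  rw [hdet]
  constructor
  · refine ⟨Nm⁻¹ * (H * S) * M⁻¹, M, hM, ?_⟩
    rw [hEU, sub_self, Matrix.mul_zero, add_zero,
      mul_nonsing_inv _ (isUnit_iff_ne_zero.mpr hM.det_pos.ne')]
    simp
  · rintro r ⟨U, W, hW, rfl⟩
    have hA : (Nm + (H * S) * (H * S)ᴴ).PosSemidef :=
      hN.posSemidef.add (posSemidef_self_mul_conjTranspose _)
    have h1 := trace_mul_re_nonneg hW.posSemidef
      (hA.conjTranspose_mul_mul_same (U - Nm⁻¹ * (H * S) * M⁻¹))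
    have h2 := log_det_bound hW hM
    rw [hEU, Matrix.mul_add, trace_add, Complex.add_re]
    linarith
end
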